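/- For every integer m ≥ 0, the map v ↦ v(X₁ − 1) is an injective K-module endomorphism of K[F₂] and it restricts to a K-module isomorphism from I^m (with I⁰ = K[F₂]) onto (K·1 ⊕ K[F₂](X₁ − 1)) ∩ I^{m+1}. -/

import Mathlib

noncomputable section

/-- The free group on two generators. -/
abbrev F2 : Type := FreeGroup (Fin 2)

/-- The first generator `X₀` of `F₂`. -/
def X0 : F2 := FreeGroup.of 0

/-- The second generator `X₁` of `F₂`. -/
def X1 : F2 := FreeGroup.of 1

/-- The unit `e^{2πi/N}` of `ℂ`. -/
def zetaN (N : ℕ) : ℂˣ :=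
  Units.mk0 (Complex.exp (2 * Real.pi * Complex.I / N)) (Complex.exp_ne_zero _)

/-- The group `μ_N` of `N`-th roots of unity in `ℂˣ`. -/
def muN (N : ℕ) : Subgroup ℂˣ := rootsOfUnity N ℂ

lemma zetaN_mem (N : ℕ) : zetaN N ∈ muN N := by
  rcases Nat.eq_zero_or_pos N with h | h
  · subst h; simp [muN, mem_rootsOfUnity]
  · rw [muN, mem_rootsOfUnity]
    have hcast : (N : ℂ) ≠ 0 := Nat.cast_ne_zero.mpr h.ne'
    have : (zetaN N : ℂ) ^ N = 1 := by
      rw [zetaN, Units.val_mk0, ← Complex.exp_nat_mul, mul_div_cancel₀ _ hcast]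
      exact Complex.exp_two_pi_mul_I
    exact Units.ext (by simpa using this)

/-- The morphism `π : F₂ → μ_N` determined by `π(X₀) = e^{2πi/N}` and `π(X₁) = 1`. -/
def piN (N : ℕ) : F2 →* (muN N) :=
  FreeGroup.lift (fun i => if i = 0 then ⟨zetaN N, zetaN_mem N⟩ else 1)

/-- The subgroup `H := ker π` of `F₂`. -/
def Hgrp (N : ℕ) : Subgroup F2 := (piN N).ker

/-- The two-sided ideal `I = ker(K[F₂] → K[μ_N])`, as a `K`-submodule of `K[F₂]`. -/
def Isub (K : Type*) [CommRing K] (N : ℕ) : Submodule K (MonoidAlgebra K F2) :=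
  (RingHom.ker (MonoidAlgebra.mapDomainRingHom K (piN N))).restrictScalars K

/-- Powers of the ideal `I`, with the convention `I⁰ = K[F₂]`. -/
def Ipow (K : Type*) [CommRing K] (N : ℕ) : ℕ → Submodule K (MonoidAlgebra K F2)
  | 0 => ⊤
  | (m + 1) => Isub K N * Ipow K N m

/-- The `K`-submodule `K[F₂](g − 1) = {v (g − 1) : v ∈ K[F₂]}` of `K[F₂]`. -/
def Rsub (K : Type*) [CommRing K] (g : F2) : Submodule K (MonoidAlgebra K F2) :=
  LinearMap.range (LinearMap.mulRight K (MonoidAlgebra.of K F2 g - 1))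

/-- The `K`-submodule `W = K·1 ⊕ K[F₂](X₁ − 1)` of `K[F₂]`. -/
def Wsub (K : Type*) [CommRing K] : Submodule K (MonoidAlgebra K F2) :=
  Submodule.span K {1} ⊔ Rsub K X1

/-!
Write `ε` for the augmentation of `K[F]`, `F` free. The Fox derivative `∂ᵢ` satisfies
`∂ᵢ (a b) = ε(b) ∂ᵢ a + a ∂ᵢ b` and `∂ᵢ (Xᵢ - 1) = 1`, so it is a left inverse of `v ↦ v (Xᵢ - 1)`.
If `ε` vanishes on a two-sided ideal `I`, then `∂ᵢ` is left `K[F]`-linear on `I`, whence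
`∂ᵢ (I ^ m * I) ⊆ I ^ m`: a multiple `v (Xᵢ - 1)` lying in `I ^ (m + 1)` has `v ∈ I ^ m`. The
elements of `K·1 ⊕ K[F](Xᵢ - 1)` lying in `I` are such multiples, because `ε` reads off their
component in `K·1`.
-/

open MonoidAlgebra SemidirectProduct

section Augmentation

variable (K : Type*) [CommRing K] {G H : Type*} [Monoid G] [Monoid H]

variable (G) in
/-- The augmentation `ε : K[G] → K`, sending every `g ∈ G` to `1`. -/
def augmentation : MonoidAlgebra K G →ₐ[K] K :=
  MonoidAlgebra.lift K K G 1

lemma augmentation_of (g : G) : augmentation K G (of K G g) = 1 := by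
  simp only [augmentation, lift_of, MonoidHom.one_apply]

lemma augmentation_of_sub_one (g : G) : augmentation K G (of K G g - 1) = 0 := by
  rw [map_sub, augmentation_of, map_one, sub_self]

lemma augmentation_mapDomainRingHom (f : G →* H) (a : MonoidAlgebra K G) :
    augmentation K H (mapDomainRingHom K f a) = augmentation K G a := by
  have h : (augmentation K H).comp (mapDomainAlgHom K K f) = augmentation K G := by
    ext; simp [augmentation]
  exact DFunLike.congr_fun h a

lemma ker_mapDomainRingHom_le_ker_augmentation (f : G →* H) :
    RingHom.ker (mapDomainRingHom K f) ≤ RingHom.ker (augmentation K G) := fun a ha ↦ by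
  rw [RingHom.mem_ker] at ha ⊢
  rw [← augmentation_mapDomainRingHom K f, ha, map_zero]

variable {K} in
lemma of_sub_one_mem_ker_mapDomainRingHom {f : G →* H} {g : G} (hg : f g = 1) :
    of K G g - 1 ∈ RingHom.ker (mapDomainRingHom K f) := by
  rw [RingHom.mem_ker, map_sub, map_one, sub_eq_zero]
  simp [hg, one_def]

variable {K} in
lemma mem_range_mulRight_of_augmentation_eq_zero {g : G} {w : MonoidAlgebra K G}
    (hw : w ∈ Submodule.span K {1} ⊔ LinearMap.range (LinearMap.mulRight K (of K G g - 1)))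
    (hε : augmentation K G w = 0) : w ∈ LinearMap.range (LinearMap.mulRight K (of K G g - 1)) := by
  obtain ⟨c, hc, _, ⟨v, rfl⟩, rfl⟩ := Submodule.mem_sup.mp hw
  obtain ⟨r, rfl⟩ := Submodule.mem_span_singleton.mp hc
  have hr : r = 0 := by
    simpa only [map_add, map_smul, map_one, smul_eq_mul, mul_one, LinearMap.mulRight_apply, map_mul,
      augmentation_of_sub_one, mul_zero, add_zero] using hε
  exact ⟨v, by rw [hr, zero_smul, zero_add]⟩

end Augmentation

section FoxDerivative

variable (K : Type*) [CommRing K] {α : Type*}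

/-- The action of a group `G` on the additive group of `K[G]` by left multiplication, in the
multiplicative form required for semidirect products. -/
def leftMulAut (G : Type*) [Group G] : G →* MulAut (Multiplicative (MonoidAlgebra K G)) :=
  (MulAutMultiplicative _).symm.toMonoidHom.comp
    ((DistribMulAction.toAddAut _ _).comp (of K G).toHomUnits)

lemma toAdd_leftMulAut_apply {G : Type*} [Group G] (g : G)
    (x : Multiplicative (MonoidAlgebra K G)) :
    (leftMulAut K G g x).toAdd = of K G g * x.toAdd :=
  rfl

open Classical in
/-- The homomorphism `g ↦ (∂ᵢ g, g)` from the free group `F` to `K[F] ⋊ F`, determined by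
`∂ᵢ Xⱼ = δᵢⱼ`. The group law of the semidirect product encodes the product rule on `F`. -/
def foxHom (i : α) :
    FreeGroup α →* Multiplicative (MonoidAlgebra K (FreeGroup α)) ⋊[leftMulAut K _] FreeGroup α :=
  FreeGroup.lift fun j ↦ ⟨.ofAdd (if j = i then 1 else 0), .of j⟩

lemma foxHom_right (i : α) (g : FreeGroup α) : (foxHom K i g).right = g := by
  have h : rightHom.comp (foxHom K i) = MonoidHom.id _ := by
    ext; simp [foxHom]
  exact DFunLike.congr_fun h g

/-- The Fox derivative `∂ᵢ = ∂/∂Xᵢ : K[F] → K[F]`. -/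
def foxDerivative (i : α) :
    MonoidAlgebra K (FreeGroup α) →ₗ[K] MonoidAlgebra K (FreeGroup α) :=
  (MonoidAlgebra.basis _ K).constr K fun g ↦ (foxHom K i g).left.toAdd

lemma foxDerivative_of (i : α) (g : FreeGroup α) :
    foxDerivative K i (of K _ g) = (foxHom K i g).left.toAdd := by
  rw [of_apply, ← basis_apply, foxDerivative, Module.Basis.constr_basis]

lemma foxDerivative_of_generator_sub_one (i : α) :
    foxDerivative K i (of K _ (FreeGroup.of i) - 1) = 1 := by
  rw [map_sub, ← map_one (of K _), foxDerivative_of, foxDerivative_of]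
  simp [foxHom, one_def]

lemma foxDerivative_of_mul_of (i : α) (g h : FreeGroup α) :
    foxDerivative K i (of K _ g * of K _ h) =
      foxDerivative K i (of K _ g) + of K _ g * foxDerivative K i (of K _ h) := by
  rw [← map_mul, foxDerivative_of, foxDerivative_of, foxDerivative_of, map_mul, mul_left,
    foxHom_right, toAdd_mul, toAdd_leftMulAut_apply]

lemma foxDerivative_mul (i : α) (a b : MonoidAlgebra K (FreeGroup α)) :
    foxDerivative K i (a * b) =
      augmentation K _ b • foxDerivative K i a + a * foxDerivative K i b := by
  induction a using MonoidAlgebra.induction_on with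
  | of g =>
    induction b using MonoidAlgebra.induction_on with
    | of h => rw [foxDerivative_of_mul_of, augmentation_of, one_smul]
    | add x y hx hy => simp only [mul_add, map_add, hx, hy, add_smul]; abel
    | smul r x hx => simp only [mul_smul_comm, map_smul, hx, smul_add, smul_assoc]
  | add x y hx hy => simp only [add_mul, map_add, hx, hy, smul_add]; abel
  | smul r x hx => simp only [smul_mul_assoc, map_smul, hx, smul_add, smul_comm r]

lemma foxDerivative_mul_of_augmentation_eq_zero (i : α) (a : MonoidAlgebra K (FreeGroup α))
    {b : MonoidAlgebra K (FreeGroup α)} (hb : augmentation K _ b = 0) :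
    foxDerivative K i (a * b) = a * foxDerivative K i b := by
  rw [foxDerivative_mul, hb, zero_smul, zero_add]

lemma leftInverse_foxDerivative_mulRight (i : α) :
    Function.LeftInverse (foxDerivative K i)
      (LinearMap.mulRight K (of K _ (FreeGroup.of i) - 1)) := fun v ↦ by
  rw [LinearMap.mulRight_apply,
    foxDerivative_mul_of_augmentation_eq_zero K i v (augmentation_of_sub_one K _),
    foxDerivative_of_generator_sub_one, mul_one]

variable {K} in
lemma foxDerivative_mem_pow {I : Ideal (MonoidAlgebra K (FreeGroup α))} [I.IsTwoSided]
    (hI : I ≤ RingHom.ker (augmentation K (FreeGroup α))) (i : α) {m : ℕ}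
    {w : MonoidAlgebra K (FreeGroup α)} (hw : w ∈ I ^ (m + 1)) :
    foxDerivative K i w ∈ I ^ m := by
  rw [Submodule.pow_succ] at hw
  induction hw using Submodule.mul_induction_on' with
  | mem_mul_mem a ha b hb =>
    rw [foxDerivative_mul_of_augmentation_eq_zero K i a (hI hb)]
    exact Ideal.mul_mem_right _ _ ha
  | add x _ y _ hx hy => simpa only [map_add] using add_mem hx hy

end FoxDerivative

theorem statement13_general (K : Type*) [CommRing K] {α : Type*} (i : α)
    (I : Ideal (MonoidAlgebra K (FreeGroup α))) [I.IsTwoSided]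
    (hi : of K _ (FreeGroup.of i) - 1 ∈ I)
    (hI : I ≤ RingHom.ker (augmentation K (FreeGroup α))) (m : ℕ) :
    Function.Injective (LinearMap.mulRight K (of K _ (FreeGroup.of i) - 1)) ∧
    Submodule.map (LinearMap.mulRight K (of K _ (FreeGroup.of i) - 1))
        ((I ^ m).restrictScalars K) =
      (Submodule.span K {1} ⊔ LinearMap.range (LinearMap.mulRight K (of K _ (FreeGroup.of i) - 1)))
        ⊓ (I ^ (m + 1)).restrictScalars K := by
  refine ⟨(leftInverse_foxDerivative_mulRight K i).injective, le_antisymm ?_ ?_⟩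
  · rintro _ ⟨v, hv, rfl⟩
    refine ⟨Submodule.mem_sup_right ⟨v, rfl⟩, ?_⟩
    exact Submodule.pow_succ (M := I) ▸ Ideal.mul_mem_mul hv hi
  · rintro w ⟨hwW, hwI⟩
    have hε : augmentation K _ w = 0 := hI (Ideal.pow_le_self m.succ_ne_zero hwI)
    obtain ⟨v, rfl⟩ := mem_range_mulRight_of_augmentation_eq_zero hwW hε
    have hv : v ∈ I ^ m :=
      leftInverse_foxDerivative_mulRight K i v ▸ foxDerivative_mem_pow hI i hwI
    exact ⟨v, hv, rfl⟩

lemma Ipow_eq_restrictScalars_pow (K : Type*) [CommRing K] (N m : ℕ) :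
    Ipow K N m = (RingHom.ker (mapDomainRingHom K (piN N)) ^ m).restrictScalars K := by
  induction m with
  | zero => rw [Submodule.pow_zero, Ideal.one_eq_top, Submodule.restrictScalars_top, Ipow]
  | succ m ih => rw [Ideal.IsTwoSided.pow_succ, Submodule.restrictScalars_mul, Ipow, ih, Isub]

lemma piN_X1 (N : ℕ) : piN N X1 = 1 := by
  simp [piN, X1]

/-- For every `m ≥ 0`, the map `v ↦ v (X₁ − 1)` is an injective `K`-module endomorphism of
`K[F₂]` restricting to a `K`-module isomorphism from `I^m` onto
`(K·1 ⊕ K[F₂](X₁ − 1)) ∩ I^{m+1}`. -/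
theorem statement13 (K : Type*) [CommRing K] [Algebra ℚ K] (N : ℕ) (hN : 0 < N) (m : ℕ) :
    Function.Injective (LinearMap.mulRight K (MonoidAlgebra.of K F2 X1 - 1)) ∧
    Submodule.map (LinearMap.mulRight K (MonoidAlgebra.of K F2 X1 - 1)) (Ipow K N m) =
      Wsub K ⊓ Ipow K N (m + 1) := by
  rw [Ipow_eq_restrictScalars_pow, Ipow_eq_restrictScalars_pow]
  exact statement13_general K 1 _ (of_sub_one_mem_ker_mapDomainRingHom (piN_X1 N))
    (ker_mapDomainRingHom_le_ker_augmentation K _) m
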